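/- (Equality condition in Hölder's inequality.) Let p, q ∈ (1, ∞) and r ≥ 1 be real numbers with 1/r = 1/p + 1/q, and let x, y be n×n positive semidefinite complex matrices. If Tr(|x·y|^r)^{1/r} = Tr(x^p)^{1/p} · Tr(y^q)^{1/q}, where |x·y| := ((x·y)* (x·y))^{1/2}, then there exists λ ≥ 0 such that x^p = λ · y^q or y^q = λ · x^p. -/

import Mathlib

open Matrix
open scoped ComplexOrder

/-- Real power of a positive semidefinite matrix via the spectral decomposition,
applying `x ^ t` (real `rpow`, so with the convention `0 ^ t = 0` for `t ≠ 0`)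
to the eigenvalues; returns `0` if the matrix is not Hermitian. -/
noncomputable def mpow {n : Type*} [Fintype n] [DecidableEq n]
    (A : Matrix n n ℂ) (t : ℝ) : Matrix n n ℂ :=
  if hA : A.IsHermitian then
    (hA.eigenvectorUnitary : Matrix n n ℂ) *
      Matrix.diagonal (fun i => ((hA.eigenvalues i ^ t : ℝ) : ℂ)) *
      star (hA.eigenvectorUnitary : Matrix n n ℂ)
  else 0


section HolderAux
open scoped Matrix.Norms.L2Operator

variable {m : Type*} [Fintype m] [DecidableEq m]

lemma young_eq {a b s t : ℝ} (ha : 0 ≤ a) (hb : 0 ≤ b) (hs : 0 < s) (ht : 0 < t) (hst : s + t = 1)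
    (h : a ^ s * b ^ t = s * a + t * b) : a = b := by
  have := (Real.geom_mean_eq_arith_mean_weighted_iff_of_pos (Finset.univ : Finset (Fin 2))
    ![s, t] ![a, b] (by simp [Fin.forall_fin_two, hs, ht]) (by simp [hst])
    (by simp [Fin.forall_fin_two, ha, hb])).1 (by simpa using h)
  simpa using this 0 (by simp) 1 (by simp)

lemma col_sum_le {K : Matrix m m ℂ} (hK : ‖K‖ ≤ 1) (j : m) : ∑ i, ‖K i j‖ ^ 2 ≤ 1 := by
  have h := l2_opNorm_mulVec K (EuclideanSpace.single j (1 : ℂ))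
  have h2 : ‖(EuclideanSpace.equiv m ℂ).symm <| K *ᵥ (EuclideanSpace.single j (1 : ℂ))‖ ≤ 1 := by
    refine h.trans ?_
    simpa using hK
  have h3 := pow_le_pow_left₀ (norm_nonneg _) h2 2
  rw [EuclideanSpace.norm_sq_eq] at h3
  simpa using h3

lemma row_sum_le {K : Matrix m m ℂ} (hK : ‖K‖ ≤ 1) (i : m) : ∑ j, ‖K i j‖ ^ 2 ≤ 1 := by
  have h := col_sum_le (K := Kᴴ) (by rwa [l2_opNorm_conjTranspose]) i
  simpa using h

lemma entry_le {K : Matrix m m ℂ} (hK : ‖K‖ ≤ 1) (i j : m) : ‖K i j‖ ≤ 1 := by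
  have h1 := col_sum_le hK j
  have h2 := Finset.single_le_sum (f := fun i => ‖K i j‖ ^ 2) (fun i _ => by positivity)
    (Finset.mem_univ i)
  have h3 : ‖K i j‖ ^ 2 ≤ 1 := h2.trans h1
  nlinarith [norm_nonneg (K i j)]

lemma mul_contr {K L : Matrix m m ℂ} (hK : ‖K‖ ≤ 1) (hL : ‖L‖ ≤ 1) : ‖K * L‖ ≤ 1 :=
  (l2_opNorm_mul K L).trans (mul_le_one₀ hK (norm_nonneg _) hL)

lemma diag_contr {d : m → ℂ} (h : ∀ i, ‖d i‖ ≤ 1) : ‖(diagonal d : Matrix m m ℂ)‖ ≤ 1 := by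
  rw [l2_opNorm_diagonal]
  exact (pi_norm_le_iff_of_nonneg zero_le_one).2 h

lemma contr_of_star_mul {K : Matrix m m ℂ} (h : ‖star K * K‖ ≤ 1) : ‖K‖ ≤ 1 := by
  have h1 := l2_opNorm_conjTranspose_mul_self K
  rw [star_eq_conjTranspose, h1] at h
  nlinarith [norm_nonneg K]

lemma one_contr : ‖(1 : Matrix m m ℂ)‖ ≤ 1 := by
  rw [← diagonal_one]; exact diag_contr (by simp)

lemma contr_of_mul_star {K : Matrix m m ℂ} (h : ‖K * star K‖ ≤ 1) : ‖K‖ ≤ 1 := by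
  rw [← l2_opNorm_conjTranspose]
  apply contr_of_star_mul
  simpa [star_eq_conjTranspose] using h

lemma unit_contr (U : unitaryGroup m ℂ) : ‖(U : Matrix m m ℂ)‖ ≤ 1 := by
  apply contr_of_star_mul
  rw [UnitaryGroup.star_mul_self]; exact one_contr

lemma unit_star_contr (U : unitaryGroup m ℂ) : ‖star (U : Matrix m m ℂ)‖ ≤ 1 := by
  rw [star_eq_conjTranspose, l2_opNorm_conjTranspose]; exact unit_contr U

/-- the bound -/
lemma two_term {A B : m → ℝ} (hA : ∀ i, 0 ≤ A i) (hB : ∀ i, 0 ≤ B i) (sA : ∑ i, A i = 1)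
    (sB : ∑ i, B i = 1) {s t : ℝ} (hs : 0 < s) (ht : 0 < t) (hst : s + t = 1)
    {C D : Matrix m m ℂ} (hC : ‖C‖ ≤ 1) (hD : ‖D‖ ≤ 1) :
    (∑ i, ∑ j, A i ^ s * B j ^ t * (‖C i j‖ * ‖D j i‖) ≤ 1) ∧
    (1 ≤ ∑ i, ∑ j, A i ^ s * B j ^ t * (‖C i j‖ * ‖D j i‖) →
      ∀ i j, C i j ≠ 0 → A i = B j) := by
  have young : ∀ i j, A i ^ s * B j ^ t ≤ s * A i + t * B j := fun i j =>
    Real.geom_mean_le_arith_mean2_weighted hs.le ht.le (hA i) (hB j) hst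
  have term : ∀ i j, A i ^ s * B j ^ t * (‖C i j‖ * ‖D j i‖) ≤
      (s * A i + t * B j) * ((‖C i j‖ ^ 2 + ‖D j i‖ ^ 2) / 2) := fun i j => by
    have h0 : 0 ≤ s * A i + t * B j :=
      add_nonneg (mul_nonneg hs.le (hA i)) (mul_nonneg ht.le (hB j))
    apply mul_le_mul (young i j) _ (by positivity) h0
    nlinarith [sq_nonneg (‖C i j‖ - ‖D j i‖)]
  have tot : ∑ i, ∑ j, (s * A i + t * B j) * ((‖C i j‖ ^ 2 + ‖D j i‖ ^ 2) / 2) ≤ 1 := by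
    have e : ∑ i, ∑ j, (s * A i + t * B j) * ((‖C i j‖ ^ 2 + ‖D j i‖ ^ 2) / 2)
      = s / 2 * (∑ i, A i * (∑ j, ‖C i j‖ ^ 2)) + s / 2 * (∑ i, A i * (∑ j, ‖D j i‖ ^ 2))
        + t / 2 * (∑ j, B j * (∑ i, ‖C i j‖ ^ 2)) + t / 2 * (∑ j, B j * (∑ i, ‖D j i‖ ^ 2)) := by
      have e1 : ∑ j, B j * (∑ i, ‖C i j‖ ^ 2) = ∑ i, ∑ j, B j * ‖C i j‖ ^ 2 := by
        simp only [Finset.mul_sum]; exact Finset.sum_comm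
      have e2 : ∑ j, B j * (∑ i, ‖D j i‖ ^ 2) = ∑ i, ∑ j, B j * ‖D j i‖ ^ 2 := by
        simp only [Finset.mul_sum]; exact Finset.sum_comm
      rw [e1, e2]
      simp only [Finset.mul_sum, ← Finset.sum_add_distrib]
      refine Finset.sum_congr rfl fun i _ => Finset.sum_congr rfl fun j _ => ?_
      ring
    have b : ∀ {E : m → ℝ} {f : m → ℝ}, (∀ i, 0 ≤ E i) → (∑ i, E i = 1) → (∀ i, f i ≤ 1) →
        ∑ i, E i * f i ≤ 1 := fun {E f} hE sE hf => by
      rw [← sE]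
      exact Finset.sum_le_sum fun i _ => mul_le_of_le_one_right (hE i) (hf i)
    have b1 := b hA sA (row_sum_le hC)
    have b2 := b hA sA (col_sum_le hD)
    have b3 := b hB sB (col_sum_le hC)
    have b4 := b hB sB (row_sum_le hD)
    rw [e]
    nlinarith
  have le := Finset.sum_le_sum fun i (_ : i ∈ Finset.univ) =>
    Finset.sum_le_sum fun j (_ : j ∈ Finset.univ) => term i j
  refine ⟨le.trans tot, fun h1 i j hc => ?_⟩
  have eq := le_antisymm le (tot.trans h1)
  have eqi := (Finset.sum_eq_sum_iff_of_le fun i (_ : i ∈ Finset.univ) =>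
    Finset.sum_le_sum fun j (_ : j ∈ Finset.univ) => term i j).1 eq i (Finset.mem_univ i)
  have eqij := (Finset.sum_eq_sum_iff_of_le fun j (_ : j ∈ Finset.univ) => term i j).1 eqi j
    (Finset.mem_univ j)
  have hcp : 0 < ‖C i j‖ := norm_pos_iff.2 hc
  apply young_eq (hA i) (hB j) hs ht hst
  apply le_antisymm (young i j)
  have h0 : 0 ≤ A i ^ s * B j ^ t :=
    mul_nonneg (Real.rpow_nonneg (hA i) _) (Real.rpow_nonneg (hB j) _)
  have hpos : 0 < (‖C i j‖ ^ 2 + ‖D j i‖ ^ 2) / 2 := by positivity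
  have : A i ^ s * B j ^ t * (‖C i j‖ * ‖D j i‖) ≤
      A i ^ s * B j ^ t * ((‖C i j‖ ^ 2 + ‖D j i‖ ^ 2) / 2) := by
    apply mul_le_mul_of_nonneg_left _ h0
    nlinarith [sq_nonneg (‖C i j‖ - ‖D j i‖)]
  rw [eqij] at this
  exact le_of_mul_le_mul_right this hpos

/-- complex power with `0 ^ z = 0` -/
noncomputable def gp (a : ℝ) (z : ℂ) : ℂ := if a = 0 then 0 else Complex.exp (z * (Real.log a : ℝ))

lemma gp_norm {a : ℝ} (ha : 0 ≤ a) (z : ℂ) : ‖gp a z‖ ≤ a ^ z.re := by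
  unfold gp
  split_ifs with h
  · simpa using Real.rpow_nonneg ha _
  · rw [Complex.norm_exp, Real.rpow_def_of_pos (lt_of_le_of_ne ha (Ne.symm h))]
    simp [mul_comm]

lemma gp_norm_le_one {a : ℝ} (ha : 0 ≤ a) (ha1 : a ≤ 1) {z : ℂ} (hz : 0 ≤ z.re) : ‖gp a z‖ ≤ 1 :=
  (gp_norm ha z).trans (Real.rpow_le_one ha ha1 hz)

lemma gp_real {a : ℝ} (ha : 0 ≤ a) {t : ℝ} (ht : a ≠ 0 ∨ t ≠ 0) : gp a t = ((a ^ t : ℝ) : ℂ) := by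
  unfold gp
  split_ifs with h
  · subst h
    rw [Real.zero_rpow (by tauto)]; simp
  · rw [Real.rpow_def_of_pos (lt_of_le_of_ne ha (Ne.symm h))]
    push_cast; rw [mul_comm]

lemma gp_diff (a : ℝ) {f : ℂ → ℂ} (hf : Differentiable ℂ f) : Differentiable ℂ fun z => gp a (f z) := by
  unfold gp
  split_ifs <;> fun_prop

/-- interpolating function -/
noncomputable def FF (V K X Y : Matrix m m ℂ) (w A B : m → ℝ) (s t : ℝ) (z : ℂ) : ℂ :=
  (V * diagonal (fun k => gp (w k) z) * star V * K *
    (X * diagonal (fun i => gp (A i) (s * (1 - z))) * star X) *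
    (Y * diagonal (fun j => gp (B j) (t * (1 - z))) * star Y)).trace

lemma FF_diff (V K X Y : Matrix m m ℂ) (w A B : m → ℝ) (s t : ℝ) :
    Differentiable ℂ (FF V K X Y w A B s t) := by
  have hw : ∀ k, Differentiable ℂ fun z => gp (w k) z := fun k => gp_diff _ differentiable_id
  have hA : ∀ k, Differentiable ℂ fun z => gp (A k) (s * (1 - z)) := fun k => gp_diff _ (by fun_prop)
  have hB : ∀ k, Differentiable ℂ fun z => gp (B k) (t * (1 - z)) := fun k => gp_diff _ (by fun_prop)
  have : FF V K X Y w A B s t = fun z => (V * diagonal (fun k => gp (w k) z) * star V * K *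
    (X * diagonal (fun i => gp (A i) (s * (1 - z))) * star X) *
    (Y * diagonal (fun j => gp (B j) (t * (1 - z))) * star Y)).trace := rfl
  rw [this]
  simp only [trace, diag_apply, mul_apply (M := _ * _), mul_apply (M := Y), mul_apply (M := X),
    mul_apply (M := V), diagonal_apply, mul_ite, mul_zero, Finset.sum_ite_eq', Finset.mem_univ, if_true]
  fun_prop

lemma strip_bound {F : ℂ → ℂ} (hd : Differentiable ℂ F) {c : ℝ}
    (bdd : ∀ z : ℂ, 0 ≤ z.re → z.re ≤ 1 → ‖F z‖ ≤ c)
    (left1 : ∀ z : ℂ, z.re = 0 → ‖F z‖ ≤ 1) (right1 : ∀ z : ℂ, z.re = 1 → ‖F z‖ ≤ 1) :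
    ∀ z : ℂ, 0 ≤ z.re → z.re ≤ 1 → ‖F z‖ ≤ 1 := by
  intro z hz hz1
  have hz' : z ∈ Complex.HadamardThreeLines.verticalClosedStrip 0 1 := ⟨hz, hz1⟩
  have hB : BddAbove ((norm ∘ F) '' Complex.HadamardThreeLines.verticalClosedStrip 0 1) := by
    refine ⟨c, ?_⟩
    rintro _ ⟨y, hy, rfl⟩
    exact bdd y hy.1 hy.2
  have := Complex.HadamardThreeLines.norm_le_interp_of_mem_verticalClosedStrip₀₁'
    F (z := z) (a := 1) (b := 1) hz' hd.diffContOnCl hB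
    (fun z hz => left1 z hz) (fun z hz => right1 z hz)
  simpa using this

lemma strip_max {F : ℂ → ℂ} (hd : Differentiable ℂ F)
    (all : ∀ z : ℂ, 0 ≤ z.re → z.re ≤ 1 → ‖F z‖ ≤ 1) {t0 : ℝ} (h0 : 0 ≤ t0) (h1 : t0 < 1)
    (hF : F t0 = 1) : F 0 = 1 := by
  rcases h0.eq_or_lt with h | h
  · rw [← h] at hF; simpa using hF
  · have hopen : IsOpen (Complex.re ⁻¹' Set.Ioo (0 : ℝ) 1) := isOpen_Ioo.preimage Complex.continuous_re
    have hconv : Convex ℝ (Complex.re ⁻¹' Set.Ioo (0 : ℝ) 1) :=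
      (convex_Ioo (0 : ℝ) 1).linear_preimage Complex.reLm
    have hmem : (t0 : ℂ) ∈ Complex.re ⁻¹' Set.Ioo (0 : ℝ) 1 := by simp [h, h1]
    have hmax : IsMaxOn (norm ∘ F) (Complex.re ⁻¹' Set.Ioo (0 : ℝ) 1) t0 := by
      intro z hz
      simp only [Set.mem_setOf_eq, Function.comp, hF, norm_one]
      exact all z hz.1.le hz.2.le
    have := Complex.eqOn_closure_of_isPreconnected_of_isMaxOn_norm
      hconv.isPreconnected hopen hd.diffContOnCl hmem hmax
    rw [← hF]
    apply this
    rw [Complex.closure_preimage_re, closure_Ioo (by norm_num)]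
    simp

set_option maxHeartbeats 1000000 in
lemma core {V X Y : unitaryGroup m ℂ} {K : Matrix m m ℂ} (hK : ‖K‖ ≤ 1) {w A B : m → ℝ}
    (hw : ∀ i, 0 ≤ w i) (hA : ∀ i, 0 ≤ A i) (hB : ∀ i, 0 ≤ B i)
    (sw : ∑ i, w i = 1) (sA : ∑ i, A i = 1) (sB : ∑ i, B i = 1)
    {s t : ℝ} (hs : 0 < s) (ht : 0 < t) (hst : s + t = 1) {t0 : ℝ} (h0 : 0 ≤ t0) (h1 : t0 < 1)
    (hF : FF V K X Y w A B s t t0 = 1) :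
    ∀ i j, (star (X : Matrix m m ℂ) * Y) i j ≠ 0 → A i = B j := by
  have le1 : ∀ {E : m → ℝ}, (∀ i, 0 ≤ E i) → ∑ i, E i = 1 → ∀ i, E i ≤ 1 := fun {E} hE sE i => by
    rw [← sE]; exact Finset.single_le_sum (fun i _ => hE i) (Finset.mem_univ i)
  -- contractions
  have cD : ∀ {E : m → ℝ} (U : unitaryGroup m ℂ), (∀ i, 0 ≤ E i) → ∑ i, E i = 1 → ∀ z : ℂ, 0 ≤ z.re →
      ‖(U : Matrix m m ℂ) * diagonal (fun k => gp (E k) z) * star (U : Matrix m m ℂ)‖ ≤ 1 :=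
    fun {E} U hE sE z hz => mul_contr (mul_contr (unit_contr U)
      (diag_contr fun i => gp_norm_le_one (hE i) (le1 hE sE i) hz)) (unit_star_contr U)
  have bdd : ∀ z : ℂ, 0 ≤ z.re → z.re ≤ 1 → ‖FF V K X Y w A B s t z‖ ≤ Fintype.card m := by
    intro z hz hz1
    unfold FF trace
    refine (norm_sum_le _ _).trans ?_
    refine (Finset.sum_le_card_nsmul _ _ 1 fun i _ => ?_).trans (by simp)
    refine entry_le (mul_contr (mul_contr (mul_contr (cD V hw sw z hz) hK) (cD X hA sA _ ?_))
      (cD Y hB sB _ ?_)) _ _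
    · simp; nlinarith
    · simp; nlinarith
  have left : ∀ z : ℂ, z.re = 0 → ‖FF V K X Y w A B s t z‖ ≤
      ∑ i, ∑ j, A i ^ s * B j ^ t * (‖(star (X : Matrix m m ℂ) * Y) i j‖ *
      ‖(star (Y : Matrix m m ℂ) *
        ((V : Matrix m m ℂ) * diagonal (fun k => gp (w k) z) * star (V : Matrix m m ℂ) * K) * X) j i‖) := by
    intro z hz
    have e : FF V K X Y w A B s t z = ∑ i, ∑ j, gp (A i) (s * (1 - z)) * gp (B j) (t * (1 - z)) *
        ((star (X : Matrix m m ℂ) * Y) i j * (star (Y : Matrix m m ℂ) *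
        ((V : Matrix m m ℂ) * diagonal (fun k => gp (w k) z) * star (V : Matrix m m ℂ) * K) * X) j i) := by
      unfold FF
      set Q := (V : Matrix m m ℂ) * diagonal (fun k => gp (w k) z) * star (V : Matrix m m ℂ) * K
      set DA := diagonal (fun i => gp (A i) (s * (1 - z)))
      set DB := diagonal (fun i => gp (B i) (t * (1 - z)))
      have : (Q * (X * DA * star (X : Matrix m m ℂ)) * (Y * DB * star (Y : Matrix m m ℂ))).trace
        = ((DA * (star (X : Matrix m m ℂ) * Y)) * (DB * (star (Y : Matrix m m ℂ) * Q * X))).trace := by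
        rw [show Q * (X * DA * star (X : Matrix m m ℂ)) * (Y * DB * star (Y : Matrix m m ℂ))
          = (Q * X) * (DA * (star (X : Matrix m m ℂ) * Y) * (DB * star (Y : Matrix m m ℂ))) by
            simp only [mul_assoc], trace_mul_comm]
        simp only [mul_assoc]
      rw [this]
      simp only [trace, diag_apply, mul_apply (M := DA * _), DA, DB, diagonal_mul]
      refine Finset.sum_congr rfl fun i _ => Finset.sum_congr rfl fun j _ => ?_
      ring
    rw [e]
    refine (norm_sum_le _ _).trans (Finset.sum_le_sum fun i _ => (norm_sum_le _ _).trans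
      (Finset.sum_le_sum fun j _ => ?_))
    rw [norm_mul, norm_mul, norm_mul]
    have g1 := gp_norm (hA i) (s * (1 - z))
    have g2 := gp_norm (hB j) (t * (1 - z))
    simp [hz] at g1 g2
    gcongr
    exact Real.rpow_nonneg (hA i) _
  have cC : ‖star (X : Matrix m m ℂ) * Y‖ ≤ 1 := mul_contr (unit_star_contr X) (unit_contr Y)
  have cE : ∀ z : ℂ, z.re = 0 → ‖star (Y : Matrix m m ℂ) *
        ((V : Matrix m m ℂ) * diagonal (fun k => gp (w k) z) * star (V : Matrix m m ℂ) * K) * X‖ ≤ 1 :=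
    fun z hz => mul_contr (mul_contr (unit_star_contr Y) (mul_contr (cD V hw sw z hz.ge) hK)) (unit_contr X)
  have left1 : ∀ z : ℂ, z.re = 0 → ‖FF V K X Y w A B s t z‖ ≤ 1 := fun z hz =>
    (left z hz).trans (two_term hA hB sA sB hs ht hst cC (cE z hz)).1
  have right1 : ∀ z : ℂ, z.re = 1 → ‖FF V K X Y w A B s t z‖ ≤ 1 := by
    intro z hz
    unfold FF
    set R := K * (X * diagonal (fun i => gp (A i) (s * (1 - z))) * star (X : Matrix m m ℂ)) *
      (Y * diagonal (fun j => gp (B j) (t * (1 - z))) * star (Y : Matrix m m ℂ)) with hR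
    have cR : ‖R‖ ≤ 1 := mul_contr (mul_contr hK (cD X hA sA _ (by simp [hz])))
      (cD Y hB sB _ (by simp [hz]))
    have : ((V : Matrix m m ℂ) * diagonal (fun k => gp (w k) z) * star (V : Matrix m m ℂ) * K *
      (X * diagonal (fun i => gp (A i) (s * (1 - z))) * star (X : Matrix m m ℂ)) *
      (Y * diagonal (fun j => gp (B j) (t * (1 - z))) * star (Y : Matrix m m ℂ))).trace
      = (diagonal (fun k => gp (w k) z) * (star (V : Matrix m m ℂ) * R * V)).trace := by
      rw [show (V : Matrix m m ℂ) * diagonal (fun k => gp (w k) z) * star (V : Matrix m m ℂ) * K *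
      (X * diagonal (fun i => gp (A i) (s * (1 - z))) * star (X : Matrix m m ℂ)) *
      (Y * diagonal (fun j => gp (B j) (t * (1 - z))) * star (Y : Matrix m m ℂ))
        = (V : Matrix m m ℂ) * (diagonal (fun k => gp (w k) z) * (star (V : Matrix m m ℂ) * R)) by
          simp only [hR, mul_assoc], trace_mul_comm]
      simp only [mul_assoc]
    rw [this]
    simp only [trace, diag_apply, diagonal_mul]
    rw [← sw]
    refine (norm_sum_le _ _).trans (Finset.sum_le_sum fun k _ => ?_)
    rw [norm_mul]
    have g1 := gp_norm (hw k) z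
    rw [hz, Real.rpow_one] at g1
    have g2 := entry_le (mul_contr (mul_contr (unit_star_contr V) cR) (unit_contr V)) k k
    nlinarith [norm_nonneg (gp (w k) z), hw k]
  have hd := FF_diff (V : Matrix m m ℂ) K X Y w A B s t
  have all : ∀ z : ℂ, 0 ≤ z.re → z.re ≤ 1 → ‖FF V K X Y w A B s t z‖ ≤ 1 :=
    strip_bound hd bdd left1 right1
  have F0 : FF V K X Y w A B s t 0 = 1 := strip_max hd all h0 h1 hF
  refine (two_term hA hB sA sB hs ht hst cC (cE 0 (by simp))).2 ?_
  have := left 0 (by simp)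
  rwa [F0, norm_one] at this
lemma herm_decomp {A : Matrix m m ℂ} (hA : A.IsHermitian) :
    A = (hA.eigenvectorUnitary : Matrix m m ℂ) *
      diagonal (fun i => ((hA.eigenvalues i : ℝ) : ℂ)) *
      star (hA.eigenvectorUnitary : Matrix m m ℂ) := by
  conv_lhs => rw [hA.spectral_theorem]
  rfl

lemma uconj_mul (U : unitaryGroup m ℂ) (d e : m → ℂ) :
    ((U : Matrix m m ℂ) * diagonal d * star (U : Matrix m m ℂ)) *
    ((U : Matrix m m ℂ) * diagonal e * star (U : Matrix m m ℂ)) =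
    (U : Matrix m m ℂ) * diagonal (fun i => d i * e i) * star (U : Matrix m m ℂ) := by
  rw [← diagonal_mul_diagonal]
  have h := UnitaryGroup.star_mul_self U
  calc _ = (U : Matrix m m ℂ) * diagonal d * (star (U : Matrix m m ℂ) * U) * diagonal e
        * star (U : Matrix m m ℂ) := by simp only [mul_assoc]
    _ = _ := by rw [h]; simp only [mul_assoc, one_mul]

lemma conj_trace (U : unitaryGroup m ℂ) (d : m → ℂ) :
    ((U : Matrix m m ℂ) * diagonal d * star (U : Matrix m m ℂ)).trace = ∑ i, d i := by
  rw [mul_assoc, trace_mul_comm, mul_assoc, UnitaryGroup.star_mul_self, mul_one, trace_diagonal]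

lemma conj_eq (X Y : unitaryGroup m ℂ) (d e : m → ℂ)
    (h : ∀ i j, (star (X : Matrix m m ℂ) * Y) i j ≠ 0 → d i = e j) :
    (X : Matrix m m ℂ) * diagonal d * star (X : Matrix m m ℂ) =
    (Y : Matrix m m ℂ) * diagonal e * star (Y : Matrix m m ℂ) := by
  have h1 : diagonal d * (star (X : Matrix m m ℂ) * Y) = (star (X : Matrix m m ℂ) * Y) * diagonal e := by
    ext i j
    rw [diagonal_mul, mul_diagonal]
    by_cases hc : (star (X : Matrix m m ℂ) * Y) i j = 0
    · simp [hc]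
    · rw [h i j hc, mul_comm]
  have hX : (X : Matrix m m ℂ) * star (X : Matrix m m ℂ) = 1 := mem_unitaryGroup_iff.1 X.2
  have hY : (Y : Matrix m m ℂ) * star (Y : Matrix m m ℂ) = 1 := mem_unitaryGroup_iff.1 Y.2
  calc _ = (X : Matrix m m ℂ) * diagonal d * star (X : Matrix m m ℂ) * (Y * star (Y : Matrix m m ℂ)) := by
        rw [hY, mul_one]
    _ = (X : Matrix m m ℂ) * (diagonal d * (star (X : Matrix m m ℂ) * Y)) * star (Y : Matrix m m ℂ) := by
        simp only [mul_assoc]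
    _ = ((X : Matrix m m ℂ) * star (X : Matrix m m ℂ)) * (Y * diagonal e * star (Y : Matrix m m ℂ)) := by
        rw [h1]; simp only [mul_assoc]
    _ = _ := by rw [hX, one_mul]

lemma mpow_eq {A : Matrix m m ℂ} (hA : A.IsHermitian) (t : ℝ) : mpow A t =
    (hA.eigenvectorUnitary : Matrix m m ℂ) *
      Matrix.diagonal (fun i => ((hA.eigenvalues i ^ t : ℝ) : ℂ)) *
      star (hA.eigenvectorUnitary : Matrix m m ℂ) := by
  unfold mpow; rw [dif_pos hA]

lemma mpow_trace {A : Matrix m m ℂ} (hA : A.IsHermitian) (t : ℝ) : (mpow A t).trace.re =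
    ∑ i, hA.eigenvalues i ^ t := by
  rw [mpow_eq hA, conj_trace, ← Complex.ofReal_sum, Complex.ofReal_re]

lemma mpow_psd {A : Matrix m m ℂ} (hA : A.PosSemidef) (t : ℝ) : (mpow A t).PosSemidef := by
  rw [mpow_eq hA.isHermitian, star_eq_conjTranspose]
  apply PosSemidef.mul_mul_conjTranspose_same
  rw [posSemidef_diagonal_iff]
  intro i
  exact_mod_cast Real.rpow_nonneg (hA.eigenvalues_nonneg i) t

lemma mpow_half {A : Matrix m m ℂ} (hA : A.PosSemidef) : mpow A (1/2) * mpow A (1/2) = A := by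
  rw [mpow_eq hA.isHermitian, uconj_mul]
  conv_rhs => rw [herm_decomp hA.isHermitian]
  congr 3
  ext i
  have h := hA.eigenvalues_nonneg i
  rw [← Complex.ofReal_mul, ← Real.sqrt_eq_rpow, Real.mul_self_sqrt h]

lemma main_aux {p q r : ℝ}
    (hp : 1 < p) (hq : 1 < q) (hr : 1 ≤ r) (hpqr : 1 / r = 1 / p + 1 / q)
    {X Y V : unitaryGroup m ℂ} {a b s : m → ℝ} (ha : ∀ i, 0 ≤ a i) (hb : ∀ i, 0 ≤ b i)
    (hs : ∀ i, 0 ≤ s i) {Z : Matrix m m ℂ}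
    (hZ : Z = (X * diagonal (fun i => (a i : ℂ)) * star (X : Matrix m m ℂ)) *
      (Y * diagonal (fun i => (b i : ℂ)) * star (Y : Matrix m m ℂ)))
    (hZZ : Zᴴ * Z = V * diagonal (fun i => ((s i * s i : ℝ) : ℂ)) * star (V : Matrix m m ℂ))
    (hα : 0 < ∑ i, a i ^ p) (hβ : 0 < ∑ i, b i ^ q)
    (heq : (∑ i, s i ^ r) ^ (1 / r) = (∑ i, a i ^ p) ^ (1 / p) * (∑ i, b i ^ q) ^ (1 / q)) :
    ∀ i j, (star (X : Matrix m m ℂ) * Y) i j ≠ 0 →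
      a i ^ p / (∑ i, a i ^ p) = b j ^ q / (∑ i, b i ^ q) := by
  have r0 : 0 < r := by linarith
  have p0 : 0 < p := by linarith
  have q0 : 0 < q := by linarith
  set α := ∑ i, a i ^ p
  set β := ∑ i, b i ^ q
  set S := ∑ i, s i ^ r with hSd
  have hS0 : 0 ≤ S := Finset.sum_nonneg fun i _ => Real.rpow_nonneg (hs i) _
  have hS : 0 < S := by
    rcases hS0.eq_or_lt with h | h
    · rw [← h, Real.zero_rpow (by positivity)] at heq
      have : 0 < α ^ (1 / p) * β ^ (1 / q) := by positivity
      linarith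
    · exact h
  set K : Matrix m m ℂ := (V * diagonal (fun i => (((s i)⁻¹ : ℝ) : ℂ)) * star (V : Matrix m m ℂ)) * Zᴴ with hKd
  have hKc : ‖K‖ ≤ 1 := by
    apply contr_of_mul_star
    have e : K * star K = V * diagonal (fun i => (((s i)⁻¹ * (s i * s i) * (s i)⁻¹ : ℝ) : ℂ))
        * star (V : Matrix m m ℂ) := by
      have e1 : star (V * diagonal (fun i => (((s i)⁻¹ : ℝ) : ℂ)) * star (V : Matrix m m ℂ)) =
          V * diagonal (fun i => (((s i)⁻¹ : ℝ) : ℂ)) * star (V : Matrix m m ℂ) := by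
        have e2 : star (diagonal (fun i => (((s i)⁻¹ : ℝ) : ℂ))) =
            diagonal (fun i => (((s i)⁻¹ : ℝ) : ℂ)) := by
          rw [star_eq_conjTranspose, diagonal_conjTranspose]
          congr 1; ext i; simp
        rw [star_mul, star_mul, star_star, e2, mul_assoc]
      rw [hKd, star_mul, e1, star_eq_conjTranspose Zᴴ, conjTranspose_conjTranspose]
      rw [show ∀ P : Matrix m m ℂ, P * Zᴴ * (Z * P) = P * (Zᴴ * Z) * P from
        fun P => by simp only [mul_assoc], hZZ, uconj_mul, uconj_mul]
      simp only [← Complex.ofReal_mul]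
    rw [e]
    refine mul_contr (mul_contr (unit_contr V) (diag_contr fun i => ?_)) (unit_star_contr V)
    by_cases h : s i = 0
    · simp [h]
    · rw [show (s i)⁻¹ * (s i * s i) * (s i)⁻¹ = 1 by field_simp]; simp
  have hKZ : K * Z = V * diagonal (fun i => (s i : ℂ)) * star (V : Matrix m m ℂ) := by
    rw [hKd, mul_assoc, hZZ, uconj_mul]
    congr 3
    ext i
    by_cases h : s i = 0
    · simp [h]
    · rw [← Complex.ofReal_mul, show (s i)⁻¹ * (s i * s i) = s i by field_simp]
  have hst : r / p + r / q = 1 := by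
    have : r * (1 / r) = r * (1 / p + 1 / q) := by rw [hpqr]
    rw [mul_one_div_cancel r0.ne'] at this
    rw [this]; ring
  have norm1 : ∀ {f : m → ℝ} {c : ℝ}, 0 < c → ∑ i, f i = c → ∑ i, f i / c = 1 := fun {f c} hc h => by
    rw [← Finset.sum_div, h, div_self hc.ne']
  have hir : 1 / r ≤ 1 := by rw [div_le_one r0]; exact hr
  refine core (V := V) (K := K) (w := fun i => s i ^ r / S) (s := r / p) (t := r / q)
    (t0 := 1 - 1 / r) hKc
    (fun i => div_nonneg (Real.rpow_nonneg (hs i) _) hS.le)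
    (fun i => div_nonneg (Real.rpow_nonneg (ha i) _) hα.le)
    (fun i => div_nonneg (Real.rpow_nonneg (hb i) _) hβ.le)
    (norm1 hS rfl) (norm1 hα rfl) (norm1 hβ rfl) (by positivity) (by positivity) hst
    (by linarith) (by linarith [show 0 < 1 / r by positivity]) ?_
  have gen : ∀ {c e u : ℝ}, 0 ≤ c → 0 < e → 0 < u → gp (c ^ u / e) ((r / u : ℝ) * (1 - ((1 - 1 / r : ℝ) : ℂ)))
      = ((e ^ (1 / u) : ℝ) : ℂ)⁻¹ * c := fun {c e u} hc he hu => by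
    rw [show ((r / u : ℝ) : ℂ) * (1 - ((1 - 1 / r : ℝ) : ℂ)) = ((1 / u : ℝ) : ℂ) by
      have : (r : ℂ) ≠ 0 := by exact_mod_cast r0.ne'
      push_cast; field_simp; ring]
    rw [gp_real (div_nonneg (Real.rpow_nonneg hc _) he.le) (Or.inr (by positivity)),
      Real.div_rpow (Real.rpow_nonneg hc _) he.le, ← Real.rpow_mul hc, mul_one_div_cancel hu.ne',
      Real.rpow_one]
    push_cast; ring
  have conj_smul : ∀ (U : Matrix m m ℂ) (k : ℂ) (d : m → ℂ),
      U * diagonal (fun i => k * d i) * star U = k • (U * diagonal d * star U) := fun U k d => by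
    rw [show (fun i => k * d i) = k • d from rfl, diagonal_smul, Matrix.mul_smul, Matrix.smul_mul]
  unfold FF
  simp only [gen (ha _) hα p0, gen (hb _) hβ q0]
  rw [conj_smul, conj_smul, Matrix.mul_smul, Matrix.mul_smul, Matrix.smul_mul, trace_smul, trace_smul,
    mul_assoc (_ * K), mul_assoc _ K, ← hZ, hKZ, uconj_mul, conj_trace]
  have term : ∀ i, gp (s i ^ r / S) ((1 - 1 / r : ℝ) : ℂ) * (s i : ℂ) = ((s i ^ r / S ^ (1 - 1 / r) : ℝ) : ℂ) := by
    intro i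
    by_cases h : s i = 0
    · simp [h, Real.zero_rpow r0.ne']
    · have hsi : 0 < s i := lt_of_le_of_ne (hs i) (Ne.symm h)
      rw [gp_real (by positivity) (Or.inl (by positivity)), ← Complex.ofReal_mul]
      congr 1
      rw [Real.div_rpow (by positivity) hS.le, ← Real.rpow_mul hsi.le,
        show r * (1 - 1 / r) = r - 1 by field_simp, div_mul_eq_mul_div, Real.rpow_sub_one hsi.ne']
      field_simp
  simp only [term]
  rw [← Complex.ofReal_sum, ← Finset.sum_div, ← hSd]
  have e3 : S / S ^ (1 - 1 / r) = S ^ (1 / r) := by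
    rw [Real.rpow_sub hS, Real.rpow_one]
    field_simp
  rw [e3, heq]
  have h1 : ((α ^ (1 / p) : ℝ) : ℂ) ≠ 0 := by exact_mod_cast (Real.rpow_pos_of_pos hα _).ne'
  have h2 : ((β ^ (1 / q) : ℝ) : ℂ) ≠ 0 := by exact_mod_cast (Real.rpow_pos_of_pos hβ _).ne'
  rw [Complex.ofReal_mul, smul_eq_mul, smul_eq_mul]
  field_simp

lemma mpow_zero_of_sum {A : Matrix m m ℂ} (hA : A.PosSemidef) {t : ℝ}
    (h : ¬ 0 < ∑ i, hA.isHermitian.eigenvalues i ^ t) : mpow A t = 0 := by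
  have hn : ∀ i ∈ Finset.univ, 0 ≤ hA.isHermitian.eigenvalues i ^ t :=
    fun i _ => Real.rpow_nonneg (hA.eigenvalues_nonneg i) _
  have h0 := (Finset.sum_eq_zero_iff_of_nonneg hn).1 (le_antisymm (not_lt.1 h) (Finset.sum_nonneg hn))
  rw [mpow_eq hA.isHermitian]
  simp [h0]

end HolderAux

/-- Equality condition in Hölder's inequality for Schatten norms: if `x, y ≥ 0`,
`1/r = 1/p + 1/q` with `p, q ∈ (1, ∞)`, `r ≥ 1`, and
`Tr(|xy|^r)^{1/r} = Tr(x^p)^{1/p} Tr(y^q)^{1/q}`, then `x^p` and `y^q` are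
proportional. -/
theorem holder_equality_condition (n : ℕ) (p q r : ℝ)
    (hp : 1 < p) (hq : 1 < q) (hr : 1 ≤ r) (hpqr : 1 / r = 1 / p + 1 / q)
    (x y : Matrix (Fin n) (Fin n) ℂ) (hx : x.PosSemidef) (hy : y.PosSemidef)
    (heq : ((mpow (mpow ((x * y)ᴴ * (x * y)) (1 / 2)) r).trace).re ^ (1 / r)
      = ((mpow x p).trace).re ^ (1 / p) * ((mpow y q).trace).re ^ (1 / q)) :
    ∃ lam : ℝ, 0 ≤ lam ∧
      (mpow x p = lam • mpow y q ∨ mpow y q = lam • mpow x p) := by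
  have hH : ((x * y)ᴴ * (x * y)).PosSemidef := posSemidef_conjTranspose_mul_self _
  have hB := mpow_psd hH (1 / 2)
  have hBB := mpow_half hH
  set Bm := mpow ((x * y)ᴴ * (x * y)) (1 / 2)
  rw [mpow_trace hB.isHermitian, mpow_trace hx.isHermitian, mpow_trace hy.isHermitian] at heq
  by_cases hα : 0 < ∑ i, hx.isHermitian.eigenvalues i ^ p
  swap
  · exact ⟨0, le_rfl, Or.inl (by rw [mpow_zero_of_sum hx hα, zero_smul])⟩
  by_cases hβ : 0 < ∑ i, hy.isHermitian.eigenvalues i ^ q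
  swap
  · exact ⟨0, le_rfl, Or.inr (by rw [mpow_zero_of_sum hy hβ, zero_smul])⟩
  have hZ : x * y = _ := congrArg₂ (· * ·) (herm_decomp hx.isHermitian) (herm_decomp hy.isHermitian)
  have hZZ : (x * y)ᴴ * (x * y) = (hB.isHermitian.eigenvectorUnitary : Matrix _ _ ℂ) *
      diagonal (fun i => ((hB.isHermitian.eigenvalues i * hB.isHermitian.eigenvalues i : ℝ) : ℂ)) *
      star (hB.isHermitian.eigenvectorUnitary : Matrix _ _ ℂ) := by
    rw [← hBB]
    conv_lhs => rw [herm_decomp hB.isHermitian, uconj_mul]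
    simp only [Complex.ofReal_mul]
  have key := main_aux hp hq hr hpqr hx.eigenvalues_nonneg hy.eigenvalues_nonneg
    hB.eigenvalues_nonneg hZ hZZ hα hβ heq
  set α := ∑ i, hx.isHermitian.eigenvalues i ^ p
  set β := ∑ i, hy.isHermitian.eigenvalues i ^ q
  refine ⟨α / β, by positivity, Or.inl ?_⟩
  rw [mpow_eq hx.isHermitian, mpow_eq hy.isHermitian]
  rw [conj_eq _ hy.isHermitian.eigenvectorUnitary _
    (fun j => ((α / β : ℝ) : ℂ) * ((hy.isHermitian.eigenvalues j ^ q : ℝ) : ℂ))]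
  · rw [show (fun j => ((α / β : ℝ) : ℂ) * ((hy.isHermitian.eigenvalues j ^ q : ℝ) : ℂ)) =
      (α / β) • (fun j => ((hy.isHermitian.eigenvalues j ^ q : ℝ) : ℂ)) by ext j; simp]
    rw [diagonal_smul, Matrix.mul_smul, Matrix.smul_mul]
  · intro i j hij
    have := key i j hij
    rw [← Complex.ofReal_mul]
    congr 1
    field_simp at this ⊢
    linarith
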